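/- Let Ω be a bounded open subset of ℝ^N (N ≥ 3) and let p₁, p₂, q : closure(Ω) → ℝ be continuous functions satisfying 1 < p₂(x) < q⁻ ≤ q⁺ < p₁(x) < N for all x ∈ closure(Ω), where q⁻ = min_{closure(Ω)} q and q⁺ = max_{closure(Ω)} q. Fix λ > 0 and, for u : ℝ^N → ℝ of class C¹ with compact support contained in Ω, set T_λ(u) = ∫_Ω (1/p₁(x))|Du|^{p₁(x)} dx + ∫_Ω (1/p₂(x))|Du|^{p₂(x)} dx − λ ∫_Ω (1/q(x))|u|^{q(x)} dx and ‖u‖ = inf { μ > 0 : ∫_Ω (|Du(x)|/μ)^{p₁(x)} dx ≤ 1 }. Then T_λ is coercive: for every M > 0 there exists K > 0 such that every such u with ‖u‖ ≥ K satisfies T_λ(u) ≥ M. -/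

import Mathlib

open MeasureTheory ENNReal

/-- The energy functional
    `T_λ(u) = ∫_Ω (1/p₁(x))|Du|^{p₁(x)} dx + ∫_Ω (1/p₂(x))|Du|^{p₂(x)} dx
       − λ ∫_Ω (1/q(x))|u|^{q(x)} dx`. -/
noncomputable def Tfun (N : ℕ) (Ω : Set (EuclideanSpace ℝ (Fin N)))
    (p₁ p₂ q : EuclideanSpace ℝ (Fin N) → ℝ) (l : ℝ)
    (u : EuclideanSpace ℝ (Fin N) → ℝ) : ℝ :=
  (∫ x in Ω, (1 / p₁ x) * ‖fderiv ℝ u x‖ ^ p₁ x) +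
    (∫ x in Ω, (1 / p₂ x) * ‖fderiv ℝ u x‖ ^ p₂ x) -
    l * ∫ x in Ω, (1 / q x) * |u x| ^ q x

/-- `‖u‖ = inf { μ > 0 : ∫_Ω (|Du(x)|/μ)^{p₁(x)} dx ≤ 1 }`, the Luxemburg norm of
    `|Du|` with respect to the variable exponent `p₁` on `Ω`. -/
noncomputable def luxGrad (N : ℕ) (Ω : Set (EuclideanSpace ℝ (Fin N)))
    (p₁ : EuclideanSpace ℝ (Fin N) → ℝ) (u : EuclideanSpace ℝ (Fin N) → ℝ) : ℝ :=
  sInf {m : ℝ | 0 < m ∧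
    ∫⁻ x in Ω, ENNReal.ofReal ((‖fderiv ℝ u x‖ / m) ^ p₁ x) ≤ 1}

lemma aux_eps (r a ε : ℝ) (hr : 0 < r) (hra : r < a) (hε : 0 < ε) :
    ∃ B : ℝ, 0 ≤ B ∧ ∀ t p : ℝ, 0 ≤ t → a ≤ p → t ^ r ≤ ε * t ^ p + B := by
  have h1 := tendsto_rpow_neg_atTop (sub_pos.2 hra)
  have h2 := (h1.eventually (gt_mem_nhds hε)).and (Filter.eventually_ge_atTop (1 : ℝ))
  obtain ⟨T, hT, hT1⟩ := h2.exists
  refine ⟨T ^ r, by positivity, fun t p ht hp => ?_⟩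
  rcases le_total t T with h | h
  · have h3 : t ^ r ≤ T ^ r := Real.rpow_le_rpow ht h hr.le
    have h4 : 0 ≤ ε * t ^ p := by positivity
    linarith
  · have ht1 : 1 ≤ t := hT1.trans h
    have ht0 : 0 < t := by linarith
    have h3 : t ^ r = t ^ (r - p) * t ^ p := by
      rw [← Real.rpow_add ht0]; congr 1; ring
    have h4 : t ^ (r - p) ≤ t ^ (-(a - r)) := Real.rpow_le_rpow_of_exponent_le ht1 (by linarith)
    have h5 : t ^ (-(a - r)) ≤ T ^ (-(a - r)) :=
      Real.rpow_le_rpow_of_nonpos (by linarith) h (by linarith)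
    have h6 : 0 ≤ T ^ r := by positivity
    have h7 : t ^ (r - p) * t ^ p ≤ ε * t ^ p :=
      mul_le_mul_of_nonneg_right (by linarith) (by positivity)
    linarith

lemma aux_int (N : ℕ) (Ω : Set (EuclideanSpace ℝ (Fin N)))
    (hΩo : IsOpen Ω) (hΩb : Bornology.IsBounded Ω)
    (p f : EuclideanSpace ℝ (Fin N) → ℝ) (hp : ContinuousOn p Ω)
    (P B : ℝ) (hp0 : ∀ x ∈ Ω, 0 < p x) (hpP : ∀ x ∈ Ω, p x ≤ P)
    (hf : Continuous f) (hf0 : ∀ x, 0 ≤ f x) (hfB : ∀ x, f x ≤ B) :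
    IntegrableOn (fun x => f x ^ p x) Ω := by
  have hm : AEStronglyMeasurable (fun x => f x ^ p x) (volume.restrict Ω) :=
    (hf.continuousOn.rpow hp (fun x hx => Or.inr (hp0 x hx))).aestronglyMeasurable
      hΩo.measurableSet
  have : IsFiniteMeasure (volume.restrict Ω) := ⟨by simpa using hΩb.measure_lt_top⟩
  refine Integrable.of_bound hm ((1 + B) ^ P) ?_
  · refine (ae_restrict_iff' hΩo.measurableSet).2 (Filter.Eventually.of_forall fun x hx => ?_)
    have hB : 0 ≤ B := (hf0 x).trans (hfB x)
    rw [Real.norm_of_nonneg (Real.rpow_nonneg (hf0 x) _)]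
    calc f x ^ p x ≤ (1 + B) ^ p x :=
          Real.rpow_le_rpow (hf0 x) (by linarith [hfB x]) (hp0 x hx).le
      _ ≤ (1 + B) ^ P := Real.rpow_le_rpow_of_exponent_le (by linarith) (hpP x hx)

lemma aux_poincare (N : ℕ) (Ω : Set (EuclideanSpace ℝ (Fin N)))
    (hΩb : Bornology.IsBounded Ω) (r : ℝ) (hr : 1 < r) (hrN : r < N) :
    ∃ C : ℝ, 0 ≤ C ∧ ∀ u : EuclideanSpace ℝ (Fin N) → ℝ,
        ContDiff ℝ 1 u → HasCompactSupport u → tsupport u ⊆ Ω →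
        ∫ x in Ω, |u x| ^ r ≤ C * ∫ x in Ω, ‖fderiv ℝ u x‖ ^ r := by
  lift r to NNReal using by linarith
  have hr0 : (0 : ℝ) < r := by linarith
  set c := eLpNormLESNormFDerivOfLeConst ℝ
    (volume : Measure (EuclideanSpace ℝ (Fin N))) Ω r r with hc
  refine ⟨(c : ℝ) ^ (r : ℝ), by positivity, fun u hu hcs hsupp => ?_⟩
  have key := eLpNorm_le_eLpNorm_fderiv (volume : Measure (EuclideanSpace ℝ (Fin N))) hu
    ((subset_tsupport u).trans hsupp) (p := r) (by exact_mod_cast hr.le)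
    (by rw [finrank_euclideanSpace_fin]; exact_mod_cast hrN) hΩb
  rw [← hc] at key
  have hd : Continuous (fderiv ℝ u) := hu.continuous_fderiv (by norm_num)
  have m1 : MemLp u r volume := hu.continuous.memLp_of_hasCompactSupport hcs
  have m2 : MemLp (fderiv ℝ u) r volume := hd.memLp_of_hasCompactSupport (hcs.fderiv ℝ)
  have hrne : (r : ℝ≥0∞) ≠ 0 := by
    have : r ≠ 0 := by rintro rfl; simp at hr0
    exact_mod_cast this
  rw [m1.eLpNorm_eq_integral_rpow_norm hrne coe_ne_top,
    m2.eLpNorm_eq_integral_rpow_norm hrne coe_ne_top, ← ENNReal.ofReal_coe_nnreal (p := c),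
    ← ENNReal.ofReal_mul c.coe_nonneg, ENNReal.ofReal_le_ofReal_iff (by positivity)] at key
  simp only [ENNReal.coe_toReal] at key
  rw [setIntegral_eq_integral_of_forall_compl_eq_zero, setIntegral_eq_integral_of_forall_compl_eq_zero]
  · have i1 : 0 ≤ ∫ x, ‖u x‖ ^ (r : ℝ) := integral_nonneg fun x => by positivity
    have i2 : 0 ≤ ∫ x, ‖fderiv ℝ u x‖ ^ (r : ℝ) := integral_nonneg fun x => by positivity
    have := Real.rpow_le_rpow (by positivity) key hr0.le
    rw [Real.mul_rpow (by positivity) (by positivity), Real.rpow_inv_rpow i1 hr0.ne',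
      Real.rpow_inv_rpow i2 hr0.ne'] at this
    simpa only [Real.norm_eq_abs] using this
  · intro x hx
    have : fderiv ℝ u x = 0 := by
      by_contra h
      exact hx (hsupp (support_fderiv_subset ℝ h))
    rw [this, norm_zero, Real.zero_rpow hr0.ne']
  · intro x hx
    have : u x = 0 := by
      by_contra h
      exact hx (hsupp (subset_tsupport u h))
    rw [this, abs_zero, Real.zero_rpow hr0.ne']

lemma aux_lux (N : ℕ) (Ω : Set (EuclideanSpace ℝ (Fin N))) (hΩo : IsOpen Ω)
    (p₁ u : EuclideanSpace ℝ (Fin N) → ℝ) (hp : ∀ x ∈ Ω, 1 ≤ p₁ x)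
    (hint : IntegrableOn (fun x => ‖fderiv ℝ u x‖ ^ p₁ x) Ω)
    (m : ℝ) (hm : 1 ≤ m) (h : m < luxGrad N Ω p₁ u) :
    m ≤ ∫ x in Ω, ‖fderiv ℝ u x‖ ^ p₁ x := by
  have hm0 : 0 < m := by linarith
  by_contra hcon
  push Not at hcon
  refine absurd h (not_lt.2 (csInf_le ⟨0, fun y hy => hy.1.le⟩ ⟨hm0, ?_⟩))
  have hint2 : IntegrableOn (fun x => ‖fderiv ℝ u x‖ ^ p₁ x / m) Ω := hint.div_const m
  calc ∫⁻ x in Ω, ENNReal.ofReal ((‖fderiv ℝ u x‖ / m) ^ p₁ x)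
      ≤ ∫⁻ x in Ω, ENNReal.ofReal (‖fderiv ℝ u x‖ ^ p₁ x / m) := by
        refine setLIntegral_mono' hΩo.measurableSet fun x hx => ENNReal.ofReal_le_ofReal ?_
        rw [Real.div_rpow (norm_nonneg _) hm0.le]
        refine div_le_div_of_nonneg_left (by positivity) hm0 ?_
        simpa using Real.rpow_le_rpow_of_exponent_le hm (hp x hx)
    _ = ENNReal.ofReal (∫ x in Ω, ‖fderiv ℝ u x‖ ^ p₁ x / m) :=
        (ofReal_integral_eq_lintegral_ofReal hint2
          (Filter.Eventually.of_forall fun x => by positivity)).symm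
    _ ≤ 1 := by
        rw [integral_div, ENNReal.ofReal_le_one, div_le_one hm0]
        exact hcon.le

/-- Under `1 < p₂(x) < q⁻ ≤ q⁺ < p₁(x) < N` on `closure Ω`, for every fixed `λ > 0`
    the functional `T_λ` is coercive: for every `M > 0` there is `K > 0` such that
    every `C¹` function `u` with compact support in `Ω` and `‖u‖ ≥ K` satisfies
    `T_λ(u) ≥ M`. -/
theorem stmt16 (N : ℕ) (hN : 3 ≤ N) (Ω : Set (EuclideanSpace ℝ (Fin N)))
    (hΩo : IsOpen Ω) (hΩb : Bornology.IsBounded Ω)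
    (p₁ p₂ q : EuclideanSpace ℝ (Fin N) → ℝ)
    (hp₁ : ContinuousOn p₁ (closure Ω)) (hp₂ : ContinuousOn p₂ (closure Ω))
    (hq : ContinuousOn q (closure Ω))
    (qm qp : ℝ) (hqm : IsLeast (q '' closure Ω) qm)
    (hqp : IsGreatest (q '' closure Ω) qp)
    (hcond : ∀ x ∈ closure Ω, 1 < p₂ x ∧ p₂ x < qm ∧ qp < p₁ x ∧ p₁ x < N)
    (l : ℝ) (hl : 0 < l) :
    ∀ M : ℝ, 0 < M → ∃ K : ℝ, 0 < K ∧
      ∀ u : EuclideanSpace ℝ (Fin N) → ℝ,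
        ContDiff ℝ 1 u → HasCompactSupport u → tsupport u ⊆ Ω →
        K ≤ luxGrad N Ω p₁ u → M ≤ Tfun N Ω p₁ p₂ q l u := by
  have hne : (closure Ω).Nonempty := by
    obtain ⟨x, hx, _⟩ := hqm.1
    exact ⟨x, hx⟩
  obtain ⟨x0, hx0, hmin⟩ := hΩb.isCompact_closure.exists_isMinOn hne hp₁
  have hc0 := hcond x0 hx0
  have hqq : qm ≤ qp := hqp.2 hqm.1
  have hr : 1 < qp := by linarith
  have hra : qp < p₁ x0 := by linarith
  obtain ⟨C, hC, hpoin⟩ := aux_poincare N Ω hΩb qp hr (by linarith)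
  have hNpos : (0 : ℝ) < N := by linarith
  obtain ⟨B, hB, heps⟩ := aux_eps qp (p₁ x0) (1 / (2 * N * (l * C + 1))) (by linarith) hra
    (by positivity)
  set ε := 1 / (2 * N * (l * C + 1)) with hε
  have hε0 : 0 < ε := by positivity
  have hεl : l * C * ε ≤ 1 / (2 * N) := by
    rw [hε, mul_one_div, div_le_div_iff₀ (by positivity) (by positivity)]
    nlinarith
  intro M hM
  set V := volume.real Ω with hV
  have hV0 : 0 ≤ V := measureReal_nonneg
  set R := M + l * V + l * C * (B * V) with hR
  have hR0 : 0 < R := by positivity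
  refine ⟨2 * N * R + 2, by positivity, fun u hu hcs hsupp hK => ?_⟩
  have hsub : Ω ⊆ closure Ω := subset_closure
  have hms := hΩo.measurableSet
  have hd : Continuous (fderiv ℝ u) := hu.continuous_fderiv (by norm_num)
  obtain ⟨b1, hb1⟩ := hu.continuous.bounded_above_of_compact_support hcs
  obtain ⟨b2, hb2⟩ := hd.bounded_above_of_compact_support (hcs.fderiv ℝ)
  have hqb : ∀ x ∈ Ω, qm ≤ q x ∧ q x ≤ qp := fun x hx =>
    ⟨hqm.2 ⟨x, hsub hx, rfl⟩, hqp.2 ⟨x, hsub hx, rfl⟩⟩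
  have hqm1 : 1 < qm := by linarith
  have I1 : IntegrableOn (fun x => ‖fderiv ℝ u x‖ ^ p₁ x) Ω :=
    aux_int N Ω hΩo hΩb p₁ _ (hp₁.mono hsub) N b2
      (fun x hx => by linarith [hcond x (hsub hx)]) (fun x hx => (hcond x (hsub hx)).2.2.2.le)
      hd.norm (fun x => norm_nonneg _) hb2
  have I2 : IntegrableOn (fun x => ‖fderiv ℝ u x‖ ^ qp) Ω :=
    aux_int N Ω hΩo hΩb (fun _ => qp) _ continuousOn_const qp b2
      (fun x hx => by linarith) (fun x hx => le_rfl)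
      hd.norm (fun x => norm_nonneg _) hb2
  have I3 : IntegrableOn (fun x => |u x| ^ qp) Ω :=
    aux_int N Ω hΩo hΩb (fun _ => qp) _ continuousOn_const qp b1
      (fun x hx => by linarith) (fun x hx => le_rfl)
      hu.continuous.abs (fun x => abs_nonneg _) hb1
  have Ic : ∀ c : ℝ, IntegrableOn (fun _ : EuclideanSpace ℝ (Fin N) => c) Ω := fun c =>
    integrableOn_const hΩb.measure_lt_top.ne
  set G := ∫ x in Ω, ‖fderiv ℝ u x‖ ^ p₁ x with hG
  have hGK : 2 * N * R + 1 ≤ G :=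
    aux_lux N Ω hΩo p₁ u (fun x hx => by linarith [hcond x (hsub hx)]) I1 _
      (by nlinarith [mul_pos hNpos hR0]) (by linarith)
  have H1 : (1 / N) * G ≤ ∫ x in Ω, (1 / p₁ x) * ‖fderiv ℝ u x‖ ^ p₁ x := by
    rw [hG, ← integral_const_mul]
    refine setIntegral_mono_on (I1.const_mul _) ?_ hms fun x hx => ?_
    · refine Integrable.mono (I1) ?_ ?_
      · refine AEStronglyMeasurable.mul ?_ I1.aestronglyMeasurable
        refine ContinuousOn.aestronglyMeasurable ?_ hms
        exact continuousOn_const.div (hp₁.mono hsub)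
          (fun x hx => by linarith [hcond x (hsub hx)] |> ne_of_gt)
      · refine (ae_restrict_iff' hms).2 (Filter.Eventually.of_forall fun x hx => ?_)
        have h1 : 1 ≤ p₁ x := by linarith [hcond x (hsub hx)]
        rw [norm_mul]
        refine mul_le_of_le_one_left (norm_nonneg _) ?_
        rw [Real.norm_of_nonneg (by positivity), div_le_one (by linarith)]
        exact h1
    · have h1 : 1 ≤ p₁ x := by linarith [hcond x (hsub hx)]
      refine mul_le_mul_of_nonneg_right ?_ (by positivity)
      exact one_div_le_one_div_of_le (by linarith) (hcond x (hsub hx)).2.2.2.le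
  have H2 : 0 ≤ ∫ x in Ω, (1 / p₂ x) * ‖fderiv ℝ u x‖ ^ p₂ x := by
    refine setIntegral_nonneg hms fun x hx => ?_
    have h1 : 0 < p₂ x := by linarith [hcond x (hsub hx)]
    positivity
  have H3 : ∫ x in Ω, (1 / q x) * |u x| ^ q x ≤ V + ∫ x in Ω, |u x| ^ qp := by
    have e : V + ∫ x in Ω, |u x| ^ qp = ∫ x in Ω, (1 + |u x| ^ qp) := by
      rw [integral_add (Ic 1) I3]
      simp [hV]
    rw [e]
    have hx' : ∀ x ∈ Ω, 0 ≤ (1 / q x) * |u x| ^ q x ∧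
        (1 / q x) * |u x| ^ q x ≤ 1 + |u x| ^ qp := fun x hx => by
      obtain ⟨g1, g2⟩ := hqb x hx
      have g3 : 0 < q x := by linarith
      refine ⟨by positivity, ?_⟩
      have g4 : (1 / q x) * |u x| ^ q x ≤ |u x| ^ q x := by
        refine mul_le_of_le_one_left (by positivity) ?_
        rw [div_le_one g3]; linarith
      refine g4.trans ?_
      rcases le_total (|u x|) 1 with h | h
      · have := Real.rpow_le_one (abs_nonneg (u x)) h g3.le
        have : 0 ≤ |u x| ^ qp := by positivity
        linarith
      · have := Real.rpow_le_rpow_of_exponent_le h g2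
        linarith
    refine integral_mono_of_nonneg ?_ ((Ic 1).add I3) ?_
    · exact (ae_restrict_iff' hms).2 (Filter.Eventually.of_forall fun x hx => (hx' x hx).1)
    · exact (ae_restrict_iff' hms).2 (Filter.Eventually.of_forall fun x hx => (hx' x hx).2)
  have H4 : ∫ x in Ω, ‖fderiv ℝ u x‖ ^ qp ≤ ε * G + B * V := by
    have e : ε * G + B * V = ∫ x in Ω, (ε * ‖fderiv ℝ u x‖ ^ p₁ x + B) := by
      rw [integral_add (I1.const_mul ε) (Ic B), integral_const_mul]
      rw [← hG]; simp [hV, mul_comm]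
    rw [e]
    exact setIntegral_mono_on I2 ((I1.const_mul ε).add (Ic B)) hms fun x hx =>
      heps _ _ (norm_nonneg _) (hmin (hsub hx))
  have H5 := hpoin u hu hcs hsupp
  have H6 : l * ∫ x in Ω, (1 / q x) * |u x| ^ q x ≤ l * (V + C * (ε * G + B * V)) := by
    refine mul_le_mul_of_nonneg_left (H3.trans ?_) hl.le
    have := mul_le_mul_of_nonneg_left H4 hC
    linarith
  have hG0 : 0 ≤ G := by nlinarith [mul_pos hNpos hR0]
  have H7 : l * C * ε * G ≤ 1 / (2 * N) * G := mul_le_mul_of_nonneg_right hεl hG0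
  have H8 : R ≤ 1 / (2 * N) * G := by
    rw [one_div_mul_eq_div, le_div_iff₀ (by positivity)]
    linarith
  have H9 : (1 / N : ℝ) * G = 1 / (2 * N) * G + 1 / (2 * N) * G := by
    field_simp; ring
  unfold Tfun
  have H10 : l * (V + C * (ε * G + B * V)) = l * V + l * C * ε * G + l * C * (B * V) := by ring
  linarith
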